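/- Let X be a set with a point x* ∈ X, let d ≥ 1, let M ≥ 1, and let z_1, z_2 ∈ ℝ^d be nonzero vectors. Then there exist embedding functions h_1,…,h_{2M} : X → ℝ^d and invertible linear maps A_1,…,A_{2M} : ℝ^d → ℝ^d with A_1 = id and h_i = A_i ∘ h_1 for every i, such that h_{2i−1}(x*) = z_1 and h_{2i}(x*) = z_2 for every i (so the representation ensemble variance (1/(2M)²) ∑_{1≤i<j≤2M} ‖h_i(x*) − h_j(x*)‖₂² equals ‖z_1 − z_2‖₂²/4), and such that for every set Y, every class G of heads from ℝ^d to Y closed under precomposition with invertible linear maps, every performance functional p : (X → Y) → ℝ, and every g ∈ G optimal for h_1 (i.e., p(g'∘h_1) ≤ p(g∘h_1) for all g' ∈ G), the heads g_i := g ∘ A_i^{−1} belong to G, each g_i is optimal for h_i, and g_i ∘ h_i = g ∘ h_1 for all i; in particular the predictions g_i ∘ h_i(x*) are all equal, so the ensemble prediction variance at x* is zero. -/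

import Mathlib

/-!
Linear automorphisms act transitively on nonzero vectors, so composing an embedding `f` at the odd
indices with an automorphism sending `f xstar` to `z` makes the ensemble alternate between two
values at `xstar`. A class of heads closed under precomposition with automorphisms absorbs this
change of coordinates, hence no downstream prediction can see it.
-/

open Finset

/-- The variance of an ensemble of `N` vectors in pairwise form; in an inner product space it is
the mean squared distance to the average of the ensemble. -/
noncomputable def ensembleVariance {N : ℕ} {E : Type*} [Norm E] [Sub E] (v : Fin N → E) : ℝ :=
  (1 / (N : ℝ) ^ 2) * ∑ i, ∑ j, if i < j then ‖v i - v j‖ ^ 2 else 0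

/-- No head of the class `G` outperforms `g` on top of the embedding `h`, as measured by the
performance functional `p`. Membership `g ∈ G` is not part of the notion. -/
def IsOptimalHead {X E Y R : Type*} [LE R] (G : Set (E → Y)) (p : (X → Y) → R) (h : X → E)
    (g : E → Y) : Prop :=
  ∀ g' ∈ G, p (g' ∘ h) ≤ p (g ∘ h)

section Heads

variable {X E F Y R : Type*}

theorem comp_equiv_symm_comp_comp (B : E ≃ F) (g : E → Y) (h : X → E) :
    (g ∘ B.symm) ∘ (B ∘ h) = g ∘ h := by
  ext x
  simp only [Function.comp_apply, Equiv.symm_apply_apply]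

theorem IsOptimalHead.comp_equiv_symm [LE R] {G : Set (E → Y)} {G' : Set (F → Y)}
    {p : (X → Y) → R} {h : X → E} {g : E → Y} (hg : IsOptimalHead G p h g) (B : E ≃ F)
    (hG : ∀ g' ∈ G', g' ∘ B ∈ G) : IsOptimalHead G' p (B ∘ h) (g ∘ B.symm) := by
  intro g' hg'
  rw [comp_equiv_symm_comp_comp]
  exact hg (g' ∘ B) (hG g' hg')

end Heads

theorem two_nsmul_sum_sum_lt {ι M : Type*} [Fintype ι] [LinearOrder ι] [AddCommMonoid M]
    {f : ι → ι → M} (f_diag : ∀ i, f i i = 0) (f_comm : ∀ i j, f i j = f j i) :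
    2 • ∑ i, ∑ j, (if i < j then f i j else 0) = ∑ i, ∑ j, f i j := by
  have swap : ∑ i, ∑ j, (if i < j then f i j else 0) = ∑ i, ∑ j, if j < i then f i j else 0 := by
    rw [sum_comm]
    simp only [f_comm]
  have split (i j : ι) : (if i < j then f i j else 0) + (if j < i then f i j else 0) = f i j := by
    rcases lt_trichotomy i j with hij | rfl | hij
    · simp [hij, hij.not_gt]
    · simp [f_diag]
    · simp [hij, hij.not_gt]
  rw [two_nsmul]
  nth_rw 2 [swap]
  simp only [← sum_add_distrib, split]

section EnsembleVariance

variable {E : Type*} [SeminormedAddCommGroup E]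

theorem ensembleVariance_eq_sum_sum {N : ℕ} (v : Fin N → E) :
    ensembleVariance v = (∑ i, ∑ j, ‖v i - v j‖ ^ 2) / (2 * (N : ℝ) ^ 2) := by
  have pairs_twice := two_nsmul_sum_sum_lt (f := fun i j => ‖v i - v j‖ ^ 2) (by simp)
    fun i j => by rw [norm_sub_rev]
  rw [ensembleVariance, ← pairs_twice, nsmul_eq_mul, Nat.cast_ofNat,
    mul_div_mul_left _ _ two_ne_zero, one_div_mul_eq_div]

theorem ensembleVariance_ite {N : ℕ} (P : Fin N → Prop) [DecidablePred P] (a b : E) :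
    ensembleVariance (fun i => if P i then a else b) =
      #{i | P i} * #{i | ¬ P i} / (N : ℝ) ^ 2 * ‖a - b‖ ^ 2 := by
  have row (i : Fin N) : ∑ j, ‖(if P i then a else b) - (if P j then a else b)‖ ^ 2 =
      if P i then #{j | ¬ P j} * ‖a - b‖ ^ 2 else #{j | P j} * ‖a - b‖ ^ 2 := by
    split_ifs <;> simp [apply_ite, sum_ite, norm_sub_rev b a]
  simp only [ensembleVariance_eq_sum_sum, row, sum_ite, sum_const, nsmul_eq_mul]
  ring

theorem card_filter_fin_even (M : ℕ) : #{i : Fin (2 * M) | (i : ℕ) % 2 = 0} = M := by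
  calc #{i : Fin (2 * M) | (i : ℕ) % 2 = 0}
      = (2 * M).count (· ≡ 0 [MOD 2]) := by
        rw [Nat.count_eq_card_filter_range, card_filter, card_filter, sum_range]
        rfl
    _ = M := by simp [Nat.count_modEq_card _ two_pos]

theorem ensembleVariance_alternating {M : ℕ} (hM : M ≠ 0) (a b : E) :
    ensembleVariance (fun i : Fin (2 * M) => if (i : ℕ) % 2 = 0 then a else b) =
      ‖a - b‖ ^ 2 / 4 := by
  have card_odd : #{i : Fin (2 * M) | ¬ (i : ℕ) % 2 = 0} = M := by
    have even_add_odd :=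
      card_filter_add_card_filter_not (s := univ) fun i : Fin (2 * M) => (i : ℕ) % 2 = 0
    rw [card_filter_fin_even, card_univ, Fintype.card_fin] at even_add_odd
    omega
  rw [ensembleVariance_ite, card_filter_fin_even, card_odd]
  push_cast
  field_simp
  ring

end EnsembleVariance

theorem representation_variance_counterexample_general (𝕜 : Type*) {X E : Type*} [RCLike 𝕜]
    [NormedAddCommGroup E] [NormedSpace 𝕜 E] {M : ℕ} (hM : 1 ≤ M) {xstar : X} {f : X → E}
    (hf : f xstar ≠ 0) {z : E} (hz : z ≠ 0) :
    ∃ (h : Fin (2 * M) → X → E) (A : Fin (2 * M) → (E ≃ₗ[𝕜] E)),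
      h ⟨0, by omega⟩ = f ∧
      A ⟨0, by omega⟩ = LinearEquiv.refl 𝕜 E ∧
      (∀ i, h i = A i ∘ h ⟨0, by omega⟩) ∧
      (∀ i, h i xstar = if (i : ℕ) % 2 = 0 then f xstar else z) ∧
      ensembleVariance (fun i => h i xstar) = ‖f xstar - z‖ ^ 2 / 4 ∧
      ∀ (Y : Type*) (G : Set (E → Y)), (∀ g ∈ G, ∀ B : E ≃ₗ[𝕜] E, g ∘ B ∈ G) →
        ∀ p : (X → Y) → ℝ, ∀ g ∈ G, IsOptimalHead G p (h ⟨0, by omega⟩) g →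
          (∀ i, g ∘ (A i).symm ∈ G) ∧
          (∀ i, IsOptimalHead G p (h i) (g ∘ (A i).symm)) ∧
          (∀ i, (g ∘ (A i).symm) ∘ h i = g ∘ h ⟨0, by omega⟩) ∧
          ∀ i j, (g ∘ (A i).symm) (h i xstar) = (g ∘ (A j).symm) (h j xstar) := by
  obtain ⟨T, hT⟩ := SeparatingDual.exists_continuousLinearEquiv_apply_eq (R := 𝕜) hf hz
  let A (i : Fin (2 * M)) : E ≃ₗ[𝕜] E :=
    if (i : ℕ) % 2 = 0 then LinearEquiv.refl 𝕜 E else T.toLinearEquiv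
  have A_apply (i : Fin (2 * M)) : A i (f xstar) = if (i : ℕ) % 2 = 0 then f xstar else z := by
    simp only [A]
    split_ifs
    exacts [rfl, hT]
  refine ⟨fun i => A i ∘ f, A, rfl, rfl, fun _ => rfl, A_apply, ?_, ?_⟩
  · simp only [Function.comp_apply, A_apply]
    exact ensembleVariance_alternating (by omega) _ _
  · intro Y G hG p g hg hopt
    have same_prediction (i : Fin (2 * M)) : (g ∘ (A i).symm) ∘ (A i ∘ f) = g ∘ f :=
      comp_equiv_symm_comp_comp (A i).toEquiv g f
    refine ⟨fun i => hG g hg _, fun i => ?_, same_prediction, fun i j => ?_⟩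
    · exact IsOptimalHead.comp_equiv_symm hopt (A i).toEquiv fun g' hg' => hG g' hg' (A i)
    · exact congrFun ((same_prediction i).trans (same_prediction j).symm) xstar

/-- **Counter-example.** There exist embedding functions with large
representation ensemble variance at a test point, all linearly isomorphic to each other,
such that for every downstream task the optimal downstream heads yield identical
predictions at the test point (zero prediction variance). Indices are 0-based:
`h i xstar = z1` for even `i` and `= z2` for odd `i`. -/
theorem representation_variance_counterexample {X : Type*} (xstar : X) (d M : ℕ)
    (hd : 1 ≤ d) (hM : 1 ≤ M)
    (z1 z2 : EuclideanSpace ℝ (Fin d)) (hz1 : z1 ≠ 0) (hz2 : z2 ≠ 0) :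
    ∃ (h : Fin (2 * M) → X → EuclideanSpace ℝ (Fin d))
      (A : Fin (2 * M) → (EuclideanSpace ℝ (Fin d) ≃ₗ[ℝ] EuclideanSpace ℝ (Fin d))),
      A ⟨0, by omega⟩ = LinearEquiv.refl ℝ (EuclideanSpace ℝ (Fin d)) ∧
      (∀ i : Fin (2 * M), h i = ⇑(A i) ∘ h ⟨0, by omega⟩) ∧
      (∀ i : Fin (2 * M), h i xstar = if (i : ℕ) % 2 = 0 then z1 else z2) ∧
      (1 / ((2 * M : ℕ) : ℝ) ^ 2) *
          ∑ i : Fin (2 * M), ∑ j : Fin (2 * M),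
            (if i < j then ‖h i xstar - h j xstar‖ ^ 2 else 0)
        = ‖z1 - z2‖ ^ 2 / 4 ∧
      (∀ (Y : Type) (G : Set (EuclideanSpace ℝ (Fin d) → Y)),
        (∀ g ∈ G, ∀ B : EuclideanSpace ℝ (Fin d) ≃ₗ[ℝ] EuclideanSpace ℝ (Fin d),
          g ∘ ⇑B ∈ G) →
        ∀ (p : (X → Y) → ℝ), ∀ g ∈ G,
          (∀ g' ∈ G, p (g' ∘ h ⟨0, by omega⟩) ≤ p (g ∘ h ⟨0, by omega⟩)) →
          (∀ i : Fin (2 * M), g ∘ ⇑(A i).symm ∈ G) ∧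
          (∀ i : Fin (2 * M), ∀ g' ∈ G,
            p (g' ∘ h i) ≤ p ((g ∘ ⇑(A i).symm) ∘ h i)) ∧
          (∀ i : Fin (2 * M), (g ∘ ⇑(A i).symm) ∘ h i = g ∘ h ⟨0, by omega⟩) ∧
          (∀ i j : Fin (2 * M),
            (g ∘ ⇑(A i).symm) (h i xstar) = (g ∘ ⇑(A j).symm) (h j xstar))) := by
  obtain ⟨h, A, -, hA⟩ := representation_variance_counterexample_general ℝ hM (xstar := xstar)
    (f := fun _ => z1) hz1 hz2
  exact ⟨h, A, hA⟩
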